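/- Every frequently hypercyclic unilateral weighted backward shift on ℓ^p(ℤ₊) (or c₀(ℤ₊)) is distributionally chaotic. -/

import Mathlib

open Filter Topology
open scoped Classical ENNReal

noncomputable def upperDensity (A : Set ℕ) : ℝ :=
  limsup (fun n : ℕ => (((Finset.range (n+1)).filter (· ∈ A)).card : ℝ) / (n+1)) atTop

noncomputable def lowerDensity (A : Set ℕ) : ℝ :=
  liminf (fun n : ℕ => (((Finset.range (n+1)).filter (· ∈ A)).card : ℝ) / (n+1)) atTop

noncomputable def upperDensityZ (A : Set ℤ) : ℝ :=
  limsup (fun n : ℕ => (((Finset.Icc (-(n:ℤ)) (n:ℤ)).filter (· ∈ A)).card : ℝ) / (2*n+1)) atTop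

def freqHCVec {X : Type*} [NormedAddCommGroup X] [NormedSpace ℝ X]
    (T : X →L[ℝ] X) (x : X) : Prop :=
  ∀ U : Set X, IsOpen U → U.Nonempty → 0 < lowerDensity {n : ℕ | (T ^ n) x ∈ U}

def uFreqHCVec {X : Type*} [NormedAddCommGroup X] [NormedSpace ℝ X]
    (T : X →L[ℝ] X) (x : X) : Prop :=
  ∀ U : Set X, IsOpen U → U.Nonempty → 0 < upperDensity {n : ℕ | (T ^ n) x ∈ U}

/-
Let `W n = w 1 ⋯ w n`. If the orbit of `x` visits a ball around `2 • e 0` at the times `m ∈ A`, then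
`|W d|⁻¹ ≤ |(T ^ m x) d|` whenever `m, m + d ∈ A`, so for each `m ∈ A` the sum of `|W d| ^ (-p)`
over `d ∈ A - m` is bounded. Averaging over `m ∈ A` with an invariant mean that charges `A` weighs
`|W d| ^ (-p)` with the mean of `A ∩ (A - d)`, which is bounded below on a syndetic set of `d`;
since the weights are bounded, `∑ |W d| ^ (-p)` converges (Bayart-Ruzsa). Hence `b = (1 / W n)` is a
nonzero fixed vector of `T`, and it is a limit of vectors that are killed by powers of `T`. Small
vectors `b - c` with `T ^ n c = 0` are eventually carried to `b`, so a suitable series of them has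
an orbit that stays close to `a k • b` for long windows of times, with `a` alternating between zero
and larger and larger numbers.
-/

open scoped BoundedContinuousFunction

section Density

/-- The proportion of elements of `A` among `0, …, n`; its upper and lower limits are
`upperDensity A` and `lowerDensity A`. -/
noncomputable def initialDensity (A : Set ℕ) (n : ℕ) : ℝ :=
  (((Finset.range (n + 1)).filter (· ∈ A)).card : ℝ) / (n + 1)

lemma initialDensity_nonneg (A : Set ℕ) (n : ℕ) : 0 ≤ initialDensity A n := by
  unfold initialDensity
  positivity

lemma initialDensity_le_one (A : Set ℕ) (n : ℕ) : initialDensity A n ≤ 1 := by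
  unfold initialDensity
  rw [div_le_one (by positivity)]
  have h := Finset.card_filter_le (Finset.range (n + 1)) (· ∈ A)
  rw [Finset.card_range] at h
  exact_mod_cast h

lemma isBoundedUnder_le_initialDensity (A : Set ℕ) :
    IsBoundedUnder (· ≤ ·) atTop (initialDensity A) :=
  isBoundedUnder_of ⟨1, initialDensity_le_one A⟩

lemma isBoundedUnder_ge_initialDensity (A : Set ℕ) :
    IsBoundedUnder (· ≥ ·) atTop (initialDensity A) :=
  isBoundedUnder_of ⟨0, initialDensity_nonneg A⟩

lemma lowerDensity_le_upperDensity (A : Set ℕ) : lowerDensity A ≤ upperDensity A :=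
  liminf_le_limsup (isBoundedUnder_le_initialDensity A) (isBoundedUnder_ge_initialDensity A)

lemma upperDensity_le_one (A : Set ℕ) : upperDensity A ≤ 1 :=
  limsup_le_of_le (isBoundedUnder_ge_initialDensity A).isCoboundedUnder_le
    (Eventually.of_forall (initialDensity_le_one A))

lemma upperDensity_eq_zero_of_finite {A : Set ℕ} (hA : A.Finite) : upperDensity A = 0 := by
  have hlim : Tendsto (fun n : ℕ => (hA.toFinset.card : ℝ) / (n + 1 : ℕ)) atTop (𝓝 0) :=
    (tendsto_const_div_atTop_nhds_zero_nat _).comp (tendsto_add_atTop_nat 1)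
  refine (squeeze_zero (initialDensity_nonneg A) (fun n => ?_) hlim).limsup_eq
  rw [initialDensity, Nat.cast_add_one]
  gcongr
  exact fun i hi => hA.mem_toFinset.2 (Finset.mem_filter.1 hi).2

lemma infinite_of_upperDensity_pos {A : Set ℕ} (hA : 0 < upperDensity A) : A.Infinite :=
  fun hfin => hA.ne' (upperDensity_eq_zero_of_finite hfin)

lemma one_sub_le_initialDensity {A : Set ℕ} {s n : ℕ} (hA : Set.Icc s n ⊆ A) :
    1 - s / (n + 1) ≤ initialDensity A n := by
  have hpos : (0 : ℝ) < n + 1 := by positivity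
  have hcard : n + 1 ≤ ((Finset.range (n + 1)).filter (· ∈ A)).card + s := by
    have hsub : Finset.Ico s (n + 1) ⊆ (Finset.range (n + 1)).filter (· ∈ A) := fun m hm => by
      rw [Finset.mem_Ico] at hm
      exact Finset.mem_filter.2 ⟨Finset.mem_range.2 hm.2, hA ⟨hm.1, by lia⟩⟩
    have h := Finset.card_le_card hsub
    rw [Nat.card_Ico] at h
    lia
  rw [initialDensity, one_sub_div hpos.ne']
  gcongr
  rw [sub_le_iff_le_add]
  exact_mod_cast hcard

lemma upperDensity_eq_one_of_frequently {A : Set ℕ} {s : ℕ → ℕ}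
    (hA : ∃ᶠ k in atTop, Set.Icc (s k) ((k + 1) * (s k + 1)) ⊆ A) :
    upperDensity A = 1 := by
  refine le_antisymm (upperDensity_le_one A) (le_of_forall_lt_imp_le_of_dense fun c hc => ?_)
  refine le_limsup_of_frequently_le ?_ (isBoundedUnder_le_initialDensity A)
  have hsmall : ∀ᶠ k : ℕ in atTop, 1 / ((k : ℝ) + 1) < 1 - c :=
    tendsto_one_div_add_atTop_nhds_zero_nat.eventually_lt_const (sub_pos.2 hc)
  rw [frequently_atTop]
  intro M
  obtain ⟨k, hk, hkc, hkM⟩ :=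
    (hA.and_eventually (hsmall.and (eventually_ge_atTop M))).exists
  refine ⟨(k + 1) * (s k + 1), by nlinarith, ?_⟩
  refine le_trans ?_ (one_sub_le_initialDensity hk)
  have hratio : (s k : ℝ) / (((k + 1) * (s k + 1) : ℕ) + 1) ≤ 1 / (k + 1) := by
    rw [div_le_div_iff₀ (by positivity) (by positivity)]
    push_cast
    nlinarith [(Nat.cast_nonneg k : (0 : ℝ) ≤ k)]
  linarith

end Density

section PositiveFunctional

variable {α : Type*} [TopologicalSpace α] {L : (α →ᵇ ℝ) →ₚ[ℝ] ℝ}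

lemma sq_map_le_map_sq (hL : L 1 = 1) (f : α →ᵇ ℝ) : L f ^ 2 ≤ L (f ^ 2) := by
  have hnonneg : 0 ≤ L ((f - L f • 1) ^ 2) := L.map_nonneg fun x => sq_nonneg (f x - L f * 1)
  have hexpand : (f - L f • 1) ^ 2 = f ^ 2 - (2 * L f) • f + L f ^ 2 • 1 := by
    ext x
    simp only [BoundedContinuousFunction.coe_pow, BoundedContinuousFunction.coe_sub,
      BoundedContinuousFunction.coe_add, BoundedContinuousFunction.coe_smul,
      BoundedContinuousFunction.coe_one, Pi.pow_apply, Pi.sub_apply, Pi.add_apply, Pi.one_apply,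
      smul_eq_mul]
    ring
  rw [hexpand, map_add, map_sub, map_smul, map_smul, hL, smul_eq_mul, smul_eq_mul] at hnonneg
  linarith

-- The second moment of `f 0 + ⋯ + f (k - 1)` is at least `(k * δ) ^ 2`, while small correlations
-- would keep it below `k + k ^ 2 * δ ^ 2 / 2`.
lemma exists_lt_half_sq_le_map_mul (hL : L 1 = 1) {f : ℕ → α →ᵇ ℝ} {δ : ℝ} (hδ : 0 < δ)
    (hf : ∀ i, δ ≤ L (f i)) (hf_sq : ∀ i, L (f i * f i) ≤ 1) :
    ∃ i j, i < j ∧ δ ^ 2 / 2 ≤ L (f i * f j) := by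
  by_contra! hcorr
  have hpair (i j : ℕ) : L (f i * f j) ≤ δ ^ 2 / 2 + if i = j then 1 else 0 := by
    rcases lt_trichotomy i j with h | rfl | h
    · simpa [h.ne] using (hcorr i j h).le
    · rw [if_pos rfl]
      linarith [hf_sq i, sq_nonneg δ]
    · simpa [h.ne', mul_comm] using (hcorr j i h).le
  have hmoment (k : ℕ) : ((k : ℝ) * δ) ^ 2 ≤ k * (k * (δ ^ 2 / 2) + 1) := by
    calc ((k : ℝ) * δ) ^ 2
        ≤ L (∑ i ∈ Finset.range k, f i) ^ 2 := by
          gcongr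
          rw [map_sum]
          simpa using Finset.card_nsmul_le_sum (Finset.range k) _ δ fun i _ => hf i
      _ ≤ L ((∑ i ∈ Finset.range k, f i) ^ 2) := sq_map_le_map_sq hL _
      _ = ∑ i ∈ Finset.range k, ∑ j ∈ Finset.range k, L (f i * f j) := by
          rw [sq, Finset.sum_mul_sum, map_sum]
          simp only [map_sum]
      _ ≤ ∑ i ∈ Finset.range k, ∑ j ∈ Finset.range k, (δ ^ 2 / 2 + if i = j then 1 else 0) := by
          gcongr
          exact hpair _ _
      _ = k * (k * (δ ^ 2 / 2) + 1) := by
          rw [Finset.sum_congr rfl fun i hi => by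
            rw [Finset.sum_add_distrib, Finset.sum_ite_eq, if_pos hi]]
          simp [mul_add]
  obtain ⟨k, hk⟩ := exists_nat_gt (2 / δ ^ 2)
  rw [div_lt_iff₀ (by positivity)] at hk
  have hkpos : (0 : ℝ) < k := by
    by_contra! hk0
    nlinarith [sq_nonneg δ]
  nlinarith [hmoment k, mul_lt_mul_of_pos_left hk hkpos]

end PositiveFunctional

section Syndetic

/-- A set of natural numbers is syndetic if it meets every interval of some fixed length. -/
def IsSyndetic (D : Set ℕ) : Prop := ∃ l, ∀ d, ∃ k ≤ l, d + k ∈ D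

lemma isSyndetic_of_forall_strictMono {D : Set ℕ}
    (hD : ∀ e : ℕ → ℕ, StrictMono e → ∃ i j, i < j ∧ e j - e i ∈ D) : IsSyndetic D := by
  by_contra! hgap
  simp only [IsSyndetic, not_exists, not_forall, not_and] at hgap
  choose g hg using hgap
  let e : ℕ → ℕ := Nat.rec 0 fun _ m => m + g (m + 1) + 1
  have he_succ (n : ℕ) : e (n + 1) = e n + g (e n + 1) + 1 := rfl
  have he : StrictMono e := strictMono_nat_of_lt_succ fun n => by rw [he_succ]; lia
  obtain ⟨i, j, hij, hmem⟩ := hD e he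
  obtain ⟨n, rfl⟩ : ∃ n, j = n + 1 := ⟨j - 1, by lia⟩
  have hin : e i ≤ e n := he.monotone (by lia)
  refine hg (e n + 1) (e n - e i + 1) (by lia) ?_
  rw [he_succ] at hmem
  convert hmem using 1
  lia

lemma le_pow_mul_of_le_mul_succ {v : ℕ → ℝ} {C : ℝ} (hC : 0 ≤ C)
    (hv : ∀ d, v d ≤ C * v (d + 1)) (k d : ℕ) : v d ≤ C ^ k * v (d + k) := by
  induction k with
  | zero => simp
  | succ k ih =>
    calc v d ≤ C ^ k * v (d + k) := ih
      _ ≤ C ^ k * (C * v (d + k + 1)) := by gcongr; exact hv _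
      _ = C ^ (k + 1) * v (d + (k + 1)) := by rw [pow_succ, mul_assoc, add_assoc]

lemma summable_of_summable_indicator_of_isSyndetic {D : Set ℕ} (hD : IsSyndetic D)
    {v : ℕ → ℝ} (hv : ∀ d, 0 ≤ v d) {C : ℝ} (hC : ∀ d, v d ≤ C * v (d + 1))
    (hsum : Summable (D.indicator v)) : Summable v := by
  obtain ⟨l, hl⟩ := hD
  set M := max C 1
  have hM1 : 1 ≤ M := le_max_right _ _
  have hvM (d : ℕ) : v d ≤ M * v (d + 1) :=
    (hC d).trans (mul_le_mul_of_nonneg_right (le_max_left _ _) (hv _))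
  have hsum_shifts : Summable fun d => M ^ l * ∑ k ∈ Finset.range (l + 1), D.indicator v (d + k) :=
    (summable_sum fun k _ => (summable_nat_add_iff k).2 hsum).mul_left _
  refine hsum_shifts.of_nonneg_of_le hv fun d => ?_
  obtain ⟨k, hk, hkD⟩ := hl d
  calc v d ≤ M ^ k * v (d + k) := le_pow_mul_of_le_mul_succ (by positivity) hvM k d
    _ ≤ M ^ l * v (d + k) := by gcongr; exact hv _
    _ = M ^ l * D.indicator v (d + k) := by rw [Set.indicator_of_mem hkD]
    _ ≤ M ^ l * ∑ k ∈ Finset.range (l + 1), D.indicator v (d + k) := by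
      gcongr
      exact Finset.single_le_sum (f := fun k => D.indicator v (d + k))
        (fun i _ => Set.indicator_nonneg (fun d _ => hv d) _) (Finset.mem_range.2 (by lia))

end Syndetic

section InvariantMean

/-- The shift `n ↦ f (n + d)` of a bounded sequence. -/
def shiftSeq (d : ℕ) (f : ℕ →ᵇ ℝ) : ℕ →ᵇ ℝ :=
  f.compContinuous ⟨(· + d), continuous_of_discreteTopology⟩

lemma shiftSeq_apply (d : ℕ) (f : ℕ →ᵇ ℝ) (n : ℕ) : shiftSeq d f n = f (n + d) := rfl

/-- A translation-invariant mean on bounded sequences. Positivity is part of the type of `L`, and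
invariance under a single step suffices. -/
structure IsInvariantMean (L : (ℕ →ᵇ ℝ) →ₚ[ℝ] ℝ) : Prop where
  map_one : L 1 = 1
  map_shiftSeq_one : ∀ f, L (shiftSeq 1 f) = L f

lemma IsInvariantMean.map_shiftSeq {L : (ℕ →ᵇ ℝ) →ₚ[ℝ] ℝ} (hL : IsInvariantMean L) (d : ℕ)
    (f : ℕ →ᵇ ℝ) : L (shiftSeq d f) = L f := by
  induction d with
  | zero => rfl
  | succ d ih =>
    have hcomp : shiftSeq (d + 1) f = shiftSeq 1 (shiftSeq d f) := by
      ext n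
      simp only [shiftSeq_apply, add_assoc, add_comm 1 d]
    rw [hcomp, hL.map_shiftSeq_one, ih]

/-- The Cesàro average of `f 0, …, f n`. -/
noncomputable def cesaroAverage (f : ℕ →ᵇ ℝ) (n : ℕ) : ℝ :=
  (∑ i ∈ Finset.range (n + 1), f i) / (n + 1)

lemma abs_cesaroAverage_le (f : ℕ →ᵇ ℝ) (n : ℕ) : |cesaroAverage f n| ≤ ‖f‖ := by
  have hpos : (0 : ℝ) < n + 1 := by positivity
  rw [cesaroAverage, abs_div, abs_of_pos hpos, div_le_iff₀ hpos]
  calc |∑ i ∈ Finset.range (n + 1), f i|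
      ≤ ∑ i ∈ Finset.range (n + 1), |f i| := Finset.abs_sum_le_sum_abs _ _
    _ ≤ ∑ _i ∈ Finset.range (n + 1), ‖f‖ := Finset.sum_le_sum fun i _ => f.norm_coe_le_norm i
    _ = ‖f‖ * (n + 1) := by simp [mul_comm]

lemma tendsto_cesaroAverage_shiftSeq_one_sub (f : ℕ →ᵇ ℝ) :
    Tendsto (fun n => cesaroAverage (shiftSeq 1 f) n - cesaroAverage f n) atTop (𝓝 0) := by
  have hlim : Tendsto (fun n : ℕ => 2 * ‖f‖ * (1 / ((n : ℝ) + 1))) atTop (𝓝 0) := by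
    simpa using (tendsto_one_div_add_atTop_nhds_zero_nat (𝕜 := ℝ)).const_mul (2 * ‖f‖)
  refine squeeze_zero_norm (fun n => ?_) hlim
  have htelescope : cesaroAverage (shiftSeq 1 f) n - cesaroAverage f n
      = (f (n + 1) - f 0) / (n + 1) := by
    simp only [cesaroAverage, shiftSeq_apply]
    rw [← sub_div, ← Finset.sum_sub_distrib, Finset.sum_range_sub]
  rw [htelescope, norm_div, mul_one_div, Real.norm_of_nonneg (r := (n : ℝ) + 1) (by positivity)]
  gcongr
  calc ‖f (n + 1) - f 0‖ ≤ ‖f (n + 1)‖ + ‖f 0‖ := norm_sub_le _ _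
    _ ≤ 2 * ‖f‖ := by linarith [f.norm_coe_le_norm (n + 1), f.norm_coe_le_norm 0]

lemma tendsto_cesaroAverage_limUnder (U : Ultrafilter ℕ) (f : ℕ →ᵇ ℝ) :
    Tendsto (cesaroAverage f) U (𝓝 (limUnder (U : Filter ℕ) (cesaroAverage f))) := by
  have hmem : ((U.map (cesaroAverage f) : Ultrafilter ℝ) : Filter ℝ) ≤ 𝓟 (Set.Icc (-‖f‖) ‖f‖) :=
    le_principal_iff.2 <| Ultrafilter.mem_map.2 <|
      Filter.univ_mem' fun n => abs_le.1 (abs_cesaroAverage_le f n)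
  obtain ⟨l, -, hl⟩ := isCompact_Icc.ultrafilter_le_nhds _ hmem
  exact tendsto_nhds_limUnder ⟨l, hl⟩

/-- The limit of Cesàro averages along an ultrafilter, as a positive functional. It is an invariant
mean as soon as the ultrafilter is finer than `atTop`. -/
noncomputable def cesaroMean (U : Ultrafilter ℕ) : (ℕ →ᵇ ℝ) →ₚ[ℝ] ℝ :=
  PositiveLinearMap.mk₀
    { toFun := fun f => limUnder (U : Filter ℕ) (cesaroAverage f)
      map_add' := fun f g => by
        refine (((tendsto_cesaroAverage_limUnder U f).add
          (tendsto_cesaroAverage_limUnder U g)).congr fun n => ?_).limUnder_eq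
        simp [cesaroAverage, Finset.sum_add_distrib, add_div]
      map_smul' := fun c f => by
        refine (((tendsto_cesaroAverage_limUnder U f).const_mul c).congr fun n => ?_).limUnder_eq
        simp [cesaroAverage, ← Finset.mul_sum, mul_div_assoc] }
    fun f hf => ge_of_tendsto' (tendsto_cesaroAverage_limUnder U f) fun n =>
      div_nonneg (Finset.sum_nonneg fun i _ => hf i) (by positivity)

lemma tendsto_cesaroAverage (U : Ultrafilter ℕ) (f : ℕ →ᵇ ℝ) :
    Tendsto (cesaroAverage f) U (𝓝 (cesaroMean U f)) :=
  tendsto_cesaroAverage_limUnder U f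

lemma isInvariantMean_cesaroMean {U : Ultrafilter ℕ} (hU : (U : Filter ℕ) ≤ atTop) :
    IsInvariantMean (cesaroMean U) where
  map_one := by
    refine tendsto_nhds_unique (tendsto_cesaroAverage U 1) (tendsto_const_nhds.congr fun n => ?_)
    have hpos : (n : ℝ) + 1 ≠ 0 := by positivity
    simp [cesaroAverage, hpos]
  map_shiftSeq_one f := sub_eq_zero.1 <| tendsto_nhds_unique
    ((tendsto_cesaroAverage U _).sub (tendsto_cesaroAverage U f))
    ((tendsto_cesaroAverage_shiftSeq_one_sub f).mono_left hU)

/-- The indicator function of a set of natural numbers, as a bounded sequence. -/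
noncomputable def indicatorSeq (A : Set ℕ) : ℕ →ᵇ ℝ :=
  BoundedContinuousFunction.indicator A (isClopen_discrete A)

lemma indicatorSeq_apply (A : Set ℕ) (n : ℕ) : indicatorSeq A n = if n ∈ A then 1 else 0 := by
  simp [indicatorSeq, Set.indicator_apply]

lemma indicatorSeq_nonneg (A : Set ℕ) (n : ℕ) : 0 ≤ indicatorSeq A n := by
  rw [indicatorSeq_apply]
  split_ifs <;> simp

lemma indicatorSeq_le_one (A : Set ℕ) (n : ℕ) : indicatorSeq A n ≤ 1 := by
  rw [indicatorSeq_apply]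
  split_ifs <;> simp

lemma cesaroAverage_indicatorSeq (A : Set ℕ) (n : ℕ) :
    cesaroAverage (indicatorSeq A) n = initialDensity A n := by
  simp only [cesaroAverage, initialDensity, indicatorSeq_apply, Finset.sum_boole]

lemma exists_isInvariantMean_le_map_indicatorSeq {A : Set ℕ} {δ : ℝ} (hδ : δ < upperDensity A) :
    ∃ L, IsInvariantMean L ∧ δ ≤ L (indicatorSeq A) := by
  have hfreq : ∃ᶠ n in atTop, δ < initialDensity A n :=
    frequently_lt_of_lt_limsup (isBoundedUnder_ge_initialDensity A).isCoboundedUnder_le hδ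
  have : (atTop ⊓ 𝓟 {n | δ < initialDensity A n}).NeBot := frequently_iff_neBot.1 hfreq
  have hU := Ultrafilter.of_le (atTop ⊓ 𝓟 {n | δ < initialDensity A n})
  refine ⟨_, isInvariantMean_cesaroMean (hU.trans inf_le_left),
    ge_of_tendsto (tendsto_cesaroAverage _ _) ?_⟩
  filter_upwards [hU (mem_inf_of_right (mem_principal_self _))] with n hn
  rw [cesaroAverage_indicatorSeq]
  exact le_of_lt hn

/-- The mean of `A ∩ (A - d)`. -/
noncomputable def correlation (L : (ℕ →ᵇ ℝ) →ₚ[ℝ] ℝ) (A : Set ℕ) (d : ℕ) : ℝ :=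
  L (indicatorSeq A * shiftSeq d (indicatorSeq A))

lemma IsInvariantMean.isSyndetic_half_sq_le_correlation {L : (ℕ →ᵇ ℝ) →ₚ[ℝ] ℝ}
    (hL : IsInvariantMean L) {A : Set ℕ} {δ : ℝ} (hδ : 0 < δ) (hA : δ ≤ L (indicatorSeq A)) :
    IsSyndetic {d | δ ^ 2 / 2 ≤ correlation L A d} := by
  refine isSyndetic_of_forall_strictMono fun e he => ?_
  obtain ⟨i, j, hij, hcorr⟩ := exists_lt_half_sq_le_map_mul hL.map_one
    (f := fun i => shiftSeq (e i) (indicatorSeq A)) hδ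
    (fun i => by rwa [hL.map_shiftSeq]) (fun i => by
      rw [← hL.map_one]
      exact OrderHomClass.mono L fun n => mul_le_one₀ (indicatorSeq_le_one A _)
        (indicatorSeq_nonneg A _) (indicatorSeq_le_one A _))
  refine ⟨i, j, hij, ?_⟩
  have hshift : shiftSeq (e i) (indicatorSeq A) * shiftSeq (e j) (indicatorSeq A)
      = shiftSeq (e i) (indicatorSeq A * shiftSeq (e j - e i) (indicatorSeq A)) := by
    ext n
    simp only [BoundedContinuousFunction.coe_mul, Pi.mul_apply, shiftSeq_apply, add_assoc,
      Nat.add_sub_cancel' (he hij).le]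
  rwa [hshift, hL.map_shiftSeq] at hcorr

lemma IsInvariantMean.sum_mul_correlation_le {L : (ℕ →ᵇ ℝ) →ₚ[ℝ] ℝ} (hL : IsInvariantMean L)
    {A : Set ℕ} (F : Finset ℕ) {v : ℕ → ℝ} {K : ℝ} (hK0 : 0 ≤ K)
    (hK : ∀ m ∈ A, ∑ d ∈ F with m + d ∈ A, v d ≤ K) :
    ∑ d ∈ F, v d * correlation L A d ≤ K := by
  calc ∑ d ∈ F, v d * correlation L A d
      = L (∑ d ∈ F, v d • (indicatorSeq A * shiftSeq d (indicatorSeq A))) := by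
        simp only [map_sum, map_smul, correlation, smul_eq_mul]
    _ ≤ L (K • 1) := OrderHomClass.mono L fun m => by
        by_cases hm : m ∈ A
        · simpa [shiftSeq_apply, indicatorSeq_apply, hm, Finset.sum_filter] using hK m hm
        · simpa [shiftSeq_apply, indicatorSeq_apply, hm] using hK0
    _ = K := by rw [map_smul, hL.map_one, smul_eq_mul, mul_one]

lemma summable_of_forall_sum_filter_add_mem_le {A : Set ℕ} (hA : 0 < upperDensity A)
    {v : ℕ → ℝ} (hv : ∀ d, 0 ≤ v d) {C : ℝ} (hC : ∀ d, v d ≤ C * v (d + 1)) {K : ℝ}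
    (hK : ∀ m ∈ A, ∀ F : Finset ℕ, ∑ d ∈ F with m + d ∈ A, v d ≤ K) : Summable v := by
  obtain ⟨δ, hδ, hδA⟩ := exists_between hA
  obtain ⟨L, hL, hLA⟩ := exists_isInvariantMean_le_map_indicatorSeq hδA
  obtain ⟨m₀, hm₀⟩ := (infinite_of_upperDensity_pos hA).nonempty
  have hK0 : 0 ≤ K := by simpa using hK m₀ hm₀ ∅
  have hcorr_nonneg (d : ℕ) : 0 ≤ correlation L A d :=
    L.map_nonneg fun n => mul_nonneg (indicatorSeq_nonneg A _) (indicatorSeq_nonneg A _)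
  have hsum : Summable fun d => v d * correlation L A d :=
    summable_of_sum_le (fun d => mul_nonneg (hv d) (hcorr_nonneg d)) fun F =>
      hL.sum_mul_correlation_le F hK0 fun m hm => hK m hm F
  refine summable_of_summable_indicator_of_isSyndetic
    (hL.isSyndetic_half_sq_le_correlation hδ hLA) hv hC ?_
  refine (hsum.mul_left (δ ^ 2 / 2)⁻¹).of_nonneg_of_le
    (Set.indicator_nonneg fun d _ => hv d) fun d => ?_
  refine Set.indicator_apply_le' (fun hd => ?_) fun _ =>
    mul_nonneg (by positivity) (mul_nonneg (hv d) (hcorr_nonneg d))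
  rw [le_inv_mul_iff₀ (by positivity), mul_comm]
  exact mul_le_mul_of_nonneg_left hd (hv d)

end InvariantMean

section FixedPoint

variable {𝕜 X : Type*} [NontriviallyNormedField 𝕜] [NormedAddCommGroup X] [NormedSpace 𝕜 X]

lemma pow_apply_eq_self_of_apply_eq_self {T : X →L[𝕜] X} {b : X} (hb : T b = b) (m : ℕ) :
    (T ^ m) b = b := by
  induction m with
  | zero => rfl
  | succ m ih => rw [pow_succ, mul_apply_eq_comp, hb, ih]

lemma exists_pow_apply_eq_and_norm_smul_le {T : X →L[𝕜] X} {b : X} (hb : T b = b)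
    (hb_ker : b ∈ closure {c | ∃ n, (T ^ n) c = 0}) (α : 𝕜) {ε : ℝ} (hε : 0 < ε) (M : ℕ) :
    ∃ v : X, ∃ N ≥ M, (∀ m ≥ N, (T ^ m) v = b) ∧ ∀ m ≤ M, ‖α • (T ^ m) v‖ ≤ ε := by
  have hnear : ∀ᶠ c in 𝓝 b, ∀ m ≤ M, ‖α • (T ^ m) (b - c)‖ < ε := by
    refine (Set.finite_le_nat M).eventually_all.2 fun m _ => ?_
    have hcont : Continuous fun c => ‖α • (T ^ m) (b - c)‖ := by fun_prop
    exact (hcont.tendsto b).eventually_lt_const (by simpa using hε)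
  obtain ⟨c, ⟨n, hn⟩, hc⟩ := ((mem_closure_iff_frequently.1 hb_ker).and_eventually hnear).exists
  refine ⟨b - c, max n M, le_max_right _ _, fun m hm => ?_, fun m hm => (hc m hm).le⟩
  obtain ⟨k, rfl⟩ := Nat.exists_eq_add_of_le' ((le_max_left _ _).trans hm)
  rw [map_sub, pow_apply_eq_self_of_apply_eq_self hb, pow_add,
    mul_apply_eq_comp, hn, map_zero, sub_zero]

lemma exists_seq_pow_apply_eq_and_norm_smul_le {T : X →L[𝕜] X} {b : X} (hb : T b = b)
    (hb_ker : b ∈ closure {c | ∃ n, (T ^ n) c = 0}) (α : ℕ → 𝕜) :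
    ∃ (v : ℕ → X) (s : ℕ → ℕ), s 0 = 0 ∧ ∀ k, ∀ m ∈ Set.Icc (s k) ((k + 1) * (s k + 1)),
      (∀ l < k, (T ^ m) (v l) = b) ∧ ∀ l ≥ k, ‖α l • (T ^ m) (v l)‖ ≤ (1 / 2) ^ l := by
  choose V N hN hV_eq hV_le using fun l M =>
    exists_pow_apply_eq_and_norm_smul_le hb hb_ker (α l) (by positivity : (0 : ℝ) < (1 / 2) ^ l) M
  let s : ℕ → ℕ := Nat.rec 0 fun k sk => N k ((k + 1) * (sk + 1))
  have hs_succ (k : ℕ) : s (k + 1) = N k ((k + 1) * (s k + 1)) := rfl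
  have hs_le (k : ℕ) : (k + 1) * (s k + 1) ≤ s (k + 1) := hs_succ k ▸ hN _ _
  have hs : Monotone s := monotone_nat_of_le_succ fun k => by nlinarith [hs_le k]
  refine ⟨fun l => V l ((l + 1) * (s l + 1)), s, rfl,
    fun k m hm => ⟨fun l hl => ?_, fun l hl => ?_⟩⟩
  · exact hV_eq _ _ _ (((hs_succ l).symm.trans_le (hs hl)).trans hm.1)
  · exact hV_le _ _ _ (hm.2.trans (by gcongr; exact hs hl))

-- Abel summation: `y = a 0 • b + ∑ l, (a (l + 1) - a l) • v l`, and on the `k`-th window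
-- `T ^ m` sends `v l` to `b` for `l < k` and to something negligible for `l ≥ k`.
theorem exists_forall_norm_pow_apply_sub_smul_le [CompleteSpace X] {T : X →L[𝕜] X} {b : X}
    (hb : T b = b) (hb_ker : b ∈ closure {c | ∃ n, (T ^ n) c = 0}) (a : ℕ → 𝕜) :
    ∃ (y : X) (s : ℕ → ℕ), ∀ k, ∀ m ∈ Set.Icc (s k) ((k + 1) * (s k + 1)),
      ‖(T ^ m) y - a k • b‖ ≤ (1 / 2) ^ k * 2 := by
  obtain ⟨v, s, hs0, hvs⟩ :=
    exists_seq_pow_apply_eq_and_norm_smul_le hb hb_ker fun l => a (l + 1) - a l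
  have hsummable : Summable fun l => (a (l + 1) - a l) • v l :=
    .of_norm_bounded summable_geometric_two fun l =>
      (hvs 0 0 ⟨hs0.le, Nat.zero_le _⟩).2 l (Nat.zero_le l)
  refine ⟨a 0 • b + ∑' l, (a (l + 1) - a l) • v l, s, fun k m hm => ?_⟩
  obtain ⟨hv_eq, hv_le⟩ := hvs k m hm
  have hsummable_pow : Summable fun l => (a (l + 1) - a l) • (T ^ m) (v l) := by
    simpa using hsummable.mapL (T ^ m)
  have hhead : ∑ l ∈ Finset.range k, (a (l + 1) - a l) • (T ^ m) (v l) = (a k - a 0) • b := by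
    rw [← Finset.sum_range_sub, Finset.sum_smul]
    exact Finset.sum_congr rfl fun l hl => by rw [hv_eq l (Finset.mem_range.1 hl)]
  have htail : (T ^ m) (a 0 • b + ∑' l, (a (l + 1) - a l) • v l) - a k • b
      = ∑' l, (a (l + k + 1) - a (l + k)) • (T ^ m) (v (l + k)) := by
    rw [map_add, map_smul, pow_apply_eq_self_of_apply_eq_self hb, (T ^ m).map_tsum hsummable]
    simp only [map_smul]
    rw [← hsummable_pow.sum_add_tsum_nat_add k, hhead, sub_smul]
    abel
  rw [htail]
  refine tsum_of_norm_bounded (hasSum_geometric_two.mul_left _) fun l => ?_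
  rw [← pow_add, add_comm k l]
  exact hv_le (l + k) le_add_self

end FixedPoint

section DistributionalChaos

lemma eventually_inf_principal_biUnion {W : ℕ → Set ℕ} (hW : ∀ k, (W k).Finite) {S : Set ℕ}
    {q : ℕ → Prop} (hq : ∀ᶠ k in atTop ⊓ 𝓟 S, ∀ m ∈ W k, q m) :
    ∀ᶠ m in atTop ⊓ 𝓟 (⋃ k ∈ S, W k), q m := by
  rw [eventually_inf_principal] at hq ⊢
  obtain ⟨K, hK⟩ := eventually_atTop.1 hq
  have hfin : (⋃ k ∈ Set.Iio K, W k).Finite := (Set.finite_Iio K).biUnion fun k _ => hW k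
  filter_upwards [Nat.cofinite_eq_atTop ▸ hfin.eventually_cofinite_notMem] with m hm hmS
  obtain ⟨k, hkS, hmk⟩ := Set.mem_iUnion₂.1 hmS
  exact hK k (not_lt.1 fun hk => hm (Set.mem_biUnion hk hmk)) hkS m hmk

lemma upperDensity_biUnion_Icc_eq_one {S : Set ℕ} (hS : ∃ᶠ k in atTop, k ∈ S) (s : ℕ → ℕ) :
    upperDensity (⋃ k ∈ S, Set.Icc (s k) ((k + 1) * (s k + 1))) = 1 :=
  upperDensity_eq_one_of_frequently <| hS.mono fun _ hk =>
    Set.subset_biUnion_of_mem (u := fun k => Set.Icc (s k) ((k + 1) * (s k + 1))) hk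

variable {X : Type*} [NormedAddCommGroup X] [NormedSpace ℝ X]

/-- A distributionally irregular vector: its orbit tends to zero along a set of times of upper
density one and its norm tends to infinity along another such set. An operator on a Banach space is
distributionally chaotic exactly when it has such a vector. -/
def IsDistributionallyIrregularVec (T : X →L[ℝ] X) (x : X) : Prop :=
  ∃ A B : Set ℕ, upperDensity A = 1 ∧ upperDensity B = 1 ∧
    Tendsto (fun n : ℕ => (T ^ n) x) (atTop ⊓ 𝓟 A) (𝓝 0) ∧
    Tendsto (fun n : ℕ => ‖(T ^ n) x‖) (atTop ⊓ 𝓟 B) atTop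

theorem exists_isDistributionallyIrregularVec_of_apply_eq_self [CompleteSpace X]
    {T : X →L[ℝ] X} {b : X} (hb : T b = b) (hb0 : b ≠ 0)
    (hb_ker : b ∈ closure {c | ∃ n, (T ^ n) c = 0}) :
    ∃ y, IsDistributionallyIrregularVec T y := by
  obtain ⟨y, s, hy⟩ := exists_forall_norm_pow_apply_sub_smul_le hb hb_ker
    fun k => if Even k then (k : ℝ) else 0
  have hfinite (k : ℕ) : (Set.Icc (s k) ((k + 1) * (s k + 1))).Finite := Set.finite_Icc _ _
  have herror : Tendsto (fun k : ℕ => (1 / 2 : ℝ) ^ k * 2) atTop (𝓝 0) := by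
    simpa using (tendsto_pow_atTop_nhds_zero_of_lt_one (r := (1 / 2 : ℝ))
      (by norm_num) (by norm_num)).mul_const 2
  have hgrowth : Tendsto (fun k : ℕ => k * ‖b‖ - (1 / 2 : ℝ) ^ k * 2) atTop atTop :=
    (tendsto_natCast_atTop_atTop.atTop_mul_const (norm_pos_iff.2 hb0)).atTop_add herror.neg
  refine ⟨y, _, _, upperDensity_biUnion_Icc_eq_one (S := {k | Odd k}) Nat.frequently_odd s,
    upperDensity_biUnion_Icc_eq_one (S := {k | Even k}) Nat.frequently_even s, ?_, ?_⟩
  · refine Metric.tendsto_nhds.2 fun ε hε => eventually_inf_principal_biUnion hfinite ?_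
    rw [eventually_inf_principal]
    filter_upwards [herror.eventually_lt_const hε] with k hk hodd m hm
    have h := hy k m hm
    rw [if_neg (Nat.not_even_iff_odd.2 hodd), zero_smul, sub_zero] at h
    exact (dist_zero_right _).trans_lt (h.trans_lt hk)
  · refine tendsto_atTop.2 fun R => eventually_inf_principal_biUnion hfinite ?_
    rw [eventually_inf_principal]
    filter_upwards [hgrowth.eventually_ge_atTop R] with k hk heven m hm
    have h := hy k m hm
    rw [if_pos heven] at h
    have hnorm : ‖(k : ℝ) • b‖ = k * ‖b‖ := by rw [norm_smul, Real.norm_natCast]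
    linarith [norm_le_norm_add_norm_sub ((T ^ m) y) ((k : ℝ) • b)]

end DistributionalChaos

section WeightedShift

variable {p : ℝ≥0∞}

/-- The product `w 1 * ⋯ * w n` of weights. It starts at `w 1`, the factor with which the shift
sends `e 1` to `e 0`. -/
def weightProd (w : ℕ → ℝ) (n : ℕ) : ℝ := ∏ i ∈ Finset.range n, w (i + 1)

lemma weightProd_succ (w : ℕ → ℝ) (n : ℕ) :
    weightProd w (n + 1) = weightProd w n * w (n + 1) :=
  Finset.prod_range_succ _ _

lemma inv_weightProd_eq_mul_inv {w : ℕ → ℝ} {n : ℕ} (hW : weightProd w (n + 1) ≠ 0) :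
    (weightProd w n)⁻¹ = w (n + 1) * (weightProd w (n + 1))⁻¹ := by
  rw [weightProd_succ] at hW ⊢
  rw [mul_inv_rev, mul_inv_cancel_left₀ (right_ne_zero_of_mul hW)]

variable [hp : Fact (1 ≤ p)]

/-- `T` is the unilateral weighted backward shift `e (k + 1) ↦ w (k + 1) • e k`, `e 0 ↦ 0`, written
in coordinates. -/
def IsWeightedBackwardShift (w : ℕ → ℝ)
    (T : lp (fun _ : ℕ => ℝ) p →L[ℝ] lp (fun _ : ℕ => ℝ) p) : Prop :=
  ∀ (x : lp (fun _ : ℕ => ℝ) p) (k : ℕ), T x k = w (k + 1) * x (k + 1)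

namespace IsWeightedBackwardShift

variable {w : ℕ → ℝ} {T : lp (fun _ : ℕ => ℝ) p →L[ℝ] lp (fun _ : ℕ => ℝ) p}

lemma pow_apply (hT : IsWeightedBackwardShift w T) (m : ℕ) (x : lp (fun _ : ℕ => ℝ) p) (k : ℕ) :
    (T ^ m) x k = weightProd (fun i => w (k + i)) m * x (k + m) := by
  induction m generalizing x with
  | zero => simp [weightProd]
  | succ m ih =>
    rw [pow_succ, mul_apply_eq_comp, ih, hT, weightProd_succ, mul_assoc]
    rfl

lemma pow_apply_zero (hT : IsWeightedBackwardShift w T) (m : ℕ) (x : lp (fun _ : ℕ => ℝ) p) :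
    (T ^ m) x 0 = weightProd w m * x m := by
  simpa only [zero_add] using hT.pow_apply m x 0

lemma abs_weight_le_norm (hT : IsWeightedBackwardShift w T) (k : ℕ) : |w (k + 1)| ≤ ‖T‖ := by
  have hp0 : p ≠ 0 := (zero_lt_one.trans_le hp.out).ne'
  have hnorm : ‖lp.single (E := fun _ : ℕ => ℝ) p (k + 1) 1‖ = 1 := by
    rw [lp.norm_single hp0.bot_lt, norm_one]
  calc |w (k + 1)| = ‖T (lp.single p (k + 1) 1) k‖ := by
        rw [hT, lp.single_apply_self, mul_one, Real.norm_eq_abs]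
    _ ≤ ‖T (lp.single p (k + 1) 1)‖ := lp.norm_apply_le_norm hp0 _ k
    _ ≤ ‖T‖ := T.unit_le_opNorm _ hnorm.le

lemma dense_setOf_exists_pow_apply_eq_zero (hT : IsWeightedBackwardShift w T) (hp' : p ≠ ⊤) :
    Dense {c | ∃ n, (T ^ n) c = 0} := by
  refine fun x => mem_closure_of_tendsto (lp.hasSum_single hp' x).tendsto_sum_nat
    (Eventually.of_forall fun n => ⟨n, ?_⟩)
  ext k
  have hzero : ∑ i ∈ Finset.range n, lp.single (E := fun _ : ℕ => ℝ) p i (x i) (k + n) = 0 :=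
    Finset.sum_eq_zero fun i hi =>
      lp.single_apply_ne p i _ (by have := Finset.mem_range.1 hi; lia)
  rw [hT.pow_apply, lp.coeFn_sum, Finset.sum_apply, hzero, mul_zero, lp.coeFn_zero, Pi.zero_apply]

lemma weightProd_ne_zero (hT : IsWeightedBackwardShift w T) {x : lp (fun _ : ℕ => ℝ) p}
    (hx : {m | (T ^ m) x 0 ≠ 0}.Infinite) (d : ℕ) : weightProd w d ≠ 0 := by
  obtain ⟨m, hm, hdm⟩ := hx.exists_gt d
  rw [Set.mem_ofPred_eq, hT.pow_apply_zero] at hm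
  exact Finset.prod_ne_zero_iff.2 fun i hi => Finset.prod_ne_zero_iff.1 (left_ne_zero_of_mul hm) i
    (Finset.range_mono hdm.le hi)

lemma norm_inv_weightProd_le (hT : IsWeightedBackwardShift w T) {x : lp (fun _ : ℕ => ℝ) p}
    {m d : ℕ} (hmd : 1 ≤ |(T ^ (m + d)) x 0|) : ‖(weightProd w d)⁻¹‖ ≤ ‖(T ^ m) x d‖ := by
  rw [add_comm, pow_add, mul_apply_eq_comp, hT.pow_apply_zero, abs_mul] at hmd
  have hpos : 0 < |weightProd w d| := (abs_nonneg _).lt_of_ne' fun h => by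
    rw [h, zero_mul] at hmd
    exact zero_lt_one.not_ge hmd
  rwa [norm_inv, Real.norm_eq_abs, inv_le_iff_one_le_mul₀' hpos]

lemma memℓp_inv_weightProd (hT : IsWeightedBackwardShift w T) (hp' : p ≠ ⊤)
    (hW : ∀ n, weightProd w n ≠ 0) {x : lp (fun _ : ℕ => ℝ) p} {A : Set ℕ}
    (hA : 0 < upperDensity A) (hone : ∀ m ∈ A, 1 ≤ |(T ^ m) x 0|) {R : ℝ}
    (hR : ∀ m ∈ A, ‖(T ^ m) x‖ ≤ R) : Memℓp (fun n => (weightProd w n)⁻¹) p := by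
  have hp0 : 0 < p.toReal := ENNReal.toReal_pos (zero_lt_one.trans_le hp.out).ne' hp'
  refine memℓp_gen <| summable_of_forall_sum_filter_add_mem_le hA (C := ‖T‖ ^ p.toReal)
    (K := R ^ p.toReal) (fun d => by positivity) (fun d => ?_) fun m hm F => ?_
  · rw [← Real.mul_rpow (norm_nonneg _) (norm_nonneg _), inv_weightProd_eq_mul_inv (hW (d + 1)),
      norm_mul]
    gcongr
    exact hT.abs_weight_le_norm d
  · calc ∑ d ∈ F with m + d ∈ A, ‖(weightProd w d)⁻¹‖ ^ p.toReal
        ≤ ∑ d ∈ F with m + d ∈ A, ‖(T ^ m) x d‖ ^ p.toReal := by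
          gcongr with d hd
          exact hT.norm_inv_weightProd_le (hone _ (Finset.mem_filter.1 hd).2)
      _ ≤ ‖(T ^ m) x‖ ^ p.toReal := lp.sum_rpow_le_norm_rpow hp0 _ _
      _ ≤ R ^ p.toReal := by gcongr; exact hR m hm

lemma exists_apply_eq_self (hT : IsWeightedBackwardShift w T) (hW : ∀ n, weightProd w n ≠ 0)
    (hmem : Memℓp (fun n => (weightProd w n)⁻¹) p) : ∃ b ≠ 0, T b = b := by
  let b : lp (fun _ : ℕ => ℝ) p := ⟨_, hmem⟩
  have hb (n : ℕ) : b n = (weightProd w n)⁻¹ := rfl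
  refine ⟨b, fun hb0 => ?_, ?_⟩
  · exact inv_ne_zero (hW 0) (by rw [← hb, hb0]; rfl)
  · ext k
    rw [hT, hb, hb, inv_weightProd_eq_mul_inv (hW (k + 1))]

end IsWeightedBackwardShift

lemma one_le_abs_apply_and_norm_le_of_mem_ball {y : lp (fun _ : ℕ => ℝ) p} {k : ℕ}
    (hy : y ∈ Metric.ball (lp.single (E := fun _ : ℕ => ℝ) p k 2) 1) : 1 ≤ |y k| ∧ ‖y‖ ≤ 3 := by
  have hp0 : p ≠ 0 := (zero_lt_one.trans_le hp.out).ne'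
  rw [mem_ball_iff_norm] at hy
  constructor
  · have hcoord := (lp.norm_apply_le_norm hp0 (y - lp.single p k 2) k).trans_lt hy
    rw [lp.coeFn_sub, Pi.sub_apply, lp.single_apply_self, Real.norm_eq_abs] at hcoord
    exact le_abs.2 (.inl (by linarith [(abs_lt.1 hcoord).1]))
  · have hcenter : ‖lp.single (E := fun _ : ℕ => ℝ) p k 2‖ = 2 := by
      rw [lp.norm_single hp0.bot_lt, Real.norm_two]
    linarith [norm_le_norm_add_norm_sub' y (lp.single (E := fun _ : ℕ => ℝ) p k 2)]

end WeightedShift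

theorem stmt14_general {p : ℝ≥0∞} [Fact (1 ≤ p)] (hp' : p ≠ ⊤) {w : ℕ → ℝ}
    {T : lp (fun _ : ℕ => ℝ) p →L[ℝ] lp (fun _ : ℕ => ℝ) p}
    (hT : IsWeightedBackwardShift w T) (hUFHC : ∃ x, uFreqHCVec T x) :
    ∃ x, IsDistributionallyIrregularVec T x := by
  obtain ⟨x, hx⟩ := hUFHC
  let U : Set (lp (fun _ : ℕ => ℝ) p) := Metric.ball (lp.single p 0 2) 1
  have hA : 0 < upperDensity {m | (T ^ m) x ∈ U} :=
    hx U Metric.isOpen_ball (Metric.nonempty_ball.2 one_pos)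
  have hone : ∀ m ∈ {m | (T ^ m) x ∈ U}, 1 ≤ |(T ^ m) x 0| := fun m hm =>
    (one_le_abs_apply_and_norm_le_of_mem_ball hm).1
  have hW : ∀ n, weightProd w n ≠ 0 := hT.weightProd_ne_zero <|
    (infinite_of_upperDensity_pos hA).mono fun m hm => abs_pos.1 (one_pos.trans_le (hone m hm))
  have hmem : Memℓp (fun n => (weightProd w n)⁻¹) p := hT.memℓp_inv_weightProd hp' hW hA hone
    fun m hm => (one_le_abs_apply_and_norm_le_of_mem_ball hm).2
  obtain ⟨b, hb0, hb⟩ := hT.exists_apply_eq_self hW hmem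
  exact exists_isDistributionallyIrregularVec_of_apply_eq_self hb hb0
    (hT.dense_setOf_exists_pow_apply_eq_zero hp' b)

theorem stmt14 (p : ℝ≥0∞) [hp : Fact (1 ≤ p)] (hp' : p ≠ ⊤)
    (w : ℕ → ℝ) (hw : ∀ n, 0 < w n) (C : ℝ) (hC : ∀ n, w n ≤ C)
    (T : lp (fun _ : ℕ => ℝ) p →L[ℝ] lp (fun _ : ℕ => ℝ) p)
    (hT : ∀ (x : lp (fun _ : ℕ => ℝ) p) (k : ℕ),
      (T x : ∀ _ : ℕ, ℝ) k = w (k+1) * (x : ∀ _ : ℕ, ℝ) (k+1))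
    (hFHC : ∃ x, freqHCVec T x) :
    ∃ x : lp (fun _ : ℕ => ℝ) p, ∃ A B : Set ℕ, upperDensity A = 1 ∧ upperDensity B = 1 ∧
      Tendsto (fun n : ℕ => (T ^ n) x) (atTop ⊓ 𝓟 A) (nhds 0) ∧
      Tendsto (fun n : ℕ => ‖(T ^ n) x‖) (atTop ⊓ 𝓟 B) atTop := by
  obtain ⟨x, hx⟩ := hFHC
  exact stmt14_general hp' hT
    ⟨x, fun U hU hne => (hx U hU hne).trans_le (lowerDensity_le_upperDensity _)⟩
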